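/- For every list b = (b_1, …, b_s) of positive integers and every 1 ≤ j ≤ s, the integer (b; j) equals the least common multiple of the greatest common divisors gcd(b_{i_1}, …, b_{i_{s+1−j}}) taken over all size-(s+1−j) subsets i_1 < ⋯ < i_{s+1−j} of {1, …, s}. -/

import Mathlib

/-- The least common multiple of the entries of a list of naturals. -/
def lcmList (l : List ℕ) : ℕ := l.foldr Nat.lcm 1

/-- The greatest common divisor of the entries of a list of naturals. -/
def gcdList (l : List ℕ) : ℕ := l.foldr Nat.gcd 0

/-- `(b; j)`: the gcd of the lcms of all length-`j` sublists (i.e. subsequences,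
corresponding to index sets `i₁ < ⋯ < i_j`) of `b`. -/
def lcmGcd (b : List ℕ) (j : ℕ) : ℕ :=
  gcdList (((b.sublists).filter (fun s => s.length == j)).map lcmList)

/-- The lcm of the gcds of all length-`j` sublists of `b`. -/
def gcdLcm (b : List ℕ) (j : ℕ) : ℕ :=
  lcmList (((b.sublists).filter (fun s => s.length == j)).map gcdList)

theorem aux_lcm (p k : ℕ) (hp : p.Prime) (a b : ℕ) :
    p ^ k ∣ Nat.lcm a b ↔ p ^ k ∣ a ∨ p ^ k ∣ b := by
  constructor
  · intro h
    rcases Nat.eq_zero_or_pos a with rfl | ha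
    · left; simp
    rcases Nat.eq_zero_or_pos b with rfl | hb
    · right; simp
    rw [hp.pow_dvd_iff_le_factorization (Nat.lcm_ne_zero ha.ne' hb.ne'),
      Nat.factorization_lcm ha.ne' hb.ne', Finsupp.sup_apply, le_sup_iff] at h
    rwa [hp.pow_dvd_iff_le_factorization ha.ne', hp.pow_dvd_iff_le_factorization hb.ne']
  · rintro (h | h)
    · exact h.trans (Nat.dvd_lcm_left _ _)
    · exact h.trans (Nat.dvd_lcm_right _ _)

theorem aux_lcmList (p k : ℕ) (hp : p.Prime) (hk : k ≠ 0) (l : List ℕ) :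
    p ^ k ∣ lcmList l ↔ ∃ x ∈ l, p ^ k ∣ x := by
  induction l with
  | nil => simp [lcmList, hk, hp.ne_one]
  | cons a l ih =>
    have : lcmList (a :: l) = Nat.lcm a (lcmList l) := rfl
    rw [this, aux_lcm p k hp, ih]; simp

theorem aux_gcdList (d : ℕ) (l : List ℕ) :
    d ∣ gcdList l ↔ ∀ x ∈ l, d ∣ x := by
  induction l with
  | nil => simp [gcdList]
  | cons a l ih =>
    have : gcdList (a :: l) = Nat.gcd a (gcdList l) := rfl
    rw [this, Nat.dvd_gcd_iff, ih]; simp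

theorem aux_comb (P : ℕ → Bool) (b : List ℕ) (j : ℕ) (h1 : 1 ≤ j) (h2 : j ≤ b.length) :
    (∀ l : List ℕ, l.Sublist b → l.length = j → ∃ x ∈ l, P x = true) ↔
    (∃ l : List ℕ, l.Sublist b ∧ l.length = b.length + 1 - j ∧ ∀ x ∈ l, P x = true) := by
  have hc : b.length = b.countP P + b.countP (fun x => !P x) := by
    simpa using List.length_eq_countP_add_countP P (l := b)
  constructor
  · intro h
    refine ⟨(b.filter P).take (b.length + 1 - j),
      (List.take_sublist _ _).trans List.filter_sublist, ?_, ?_⟩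
    · rw [List.length_take, ← List.countP_eq_length_filter]
      apply min_eq_left
      by_contra hlt
      obtain ⟨x, hx, hPx⟩ := h ((b.filter (fun x => !P x)).take j)
        ((List.take_sublist _ _).trans List.filter_sublist) (by
          rw [List.length_take, ← List.countP_eq_length_filter]; omega)
      have := List.mem_of_mem_take hx
      simp [hPx] at this
    · intro x hx
      exact (List.mem_filter.1 (List.mem_of_mem_take hx)).2
  · rintro ⟨l, hl, hlen, hP⟩ m hm hmlen
    by_contra hno
    push Not at hno
    have e1 := hl.countP_le (p := P)
    have e2 := hm.countP_le (p := fun x => !P x)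
    rw [List.countP_eq_length.2 hP] at e1
    rw [List.countP_eq_length.2 (fun x hx => by simpa using hno x hx)] at e2
    omega

/-- For a list `b = (b₁, …, b_s)` of positive integers and `1 ≤ j ≤ s`, the integer
`(b; j)` equals the lcm of the gcds of all size-`(s+1−j)` subsets of `b`. -/
theorem lcmGcd_eq_gcdLcm (b : List ℕ) (hpos : ∀ x ∈ b, 0 < x)
    (j : ℕ) (h1 : 1 ≤ j) (h2 : j ≤ b.length) :
    lcmGcd b j = gcdLcm b (b.length + 1 - j) := by
  have key : ∀ p k : ℕ, p.Prime →
      (p ^ k ∣ lcmGcd b j ↔ p ^ k ∣ gcdLcm b (b.length + 1 - j)) := by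
    intro p k hp
    rcases eq_or_ne k 0 with rfl | hk
    · simp
    have hc := aux_comb (fun x => decide (p ^ k ∣ x)) b j h1 h2
    simp only [decide_eq_true_eq] at hc
    unfold lcmGcd gcdLcm
    rw [aux_gcdList, aux_lcmList p k hp hk]
    simp only [List.mem_map, List.mem_filter, List.mem_sublists, beq_iff_eq,
      forall_exists_index, and_imp, exists_exists_and_eq_and, forall_apply_eq_imp_iff₂]
    simp only [aux_lcmList p k hp hk, aux_gcdList]
    constructor
    · intro h
      obtain ⟨l, a, c, d⟩ := hc.1 (fun l hl hj => h _ l hl hj rfl |> (aux_lcmList p k hp hk l).1)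
      exact ⟨l, ⟨a, c⟩, d⟩
    · rintro ⟨l, ⟨a, c⟩, d⟩ x m hm hj rfl
      exact (aux_lcmList p k hp hk m).2 (hc.2 ⟨l, a, c, d⟩ m hm hj)
  apply Nat.dvd_antisymm
  · exact (Nat.dvd_iff_prime_pow_dvd_dvd _ _).2 fun p k hp => (key p k hp).1
  · exact (Nat.dvd_iff_prime_pow_dvd_dvd _ _).2 fun p k hp => (key p k hp).2
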